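/- The automorphism group of the graph Ξ_I has cardinality exactly 12. -/

import Mathlib

/-- The ten faces of the hemi-icosahedron on vertex set `Fin 6`. -/
def faces : Finset (Finset (Fin 6)) :=
  {{0,1,2}, {0,2,3}, {0,3,4}, {0,4,5}, {0,5,1}, {1,2,4}, {2,3,5}, {1,3,4}, {2,4,5}, {1,3,5}}

/-- The 16-element vertex set: `Fin 6` together with the ten faces. -/
abbrev V16 := Fin 6 ⊕ {f : Finset (Fin 6) // f ∈ faces}

/-- Vertex-face incidence: `v : Fin 6` is incident to a face `f` iff `v ∈ f`. -/
def piRel : V16 → V16 → Prop := fun a b =>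
  match a, b with
  | Sum.inl v, Sum.inr f => v ∈ f.1
  | _, _ => False

instance : DecidableRel piRel := fun a b =>
  match a, b with
  | Sum.inl v, Sum.inr f => inferInstanceAs (Decidable (v ∈ f.1))
  | Sum.inl _, Sum.inl _ => Decidable.isFalse id
  | Sum.inr _, Sum.inl _ => Decidable.isFalse id
  | Sum.inr _, Sum.inr _ => Decidable.isFalse id

/-- `Π_I`, the projective vertex-face graph of the icosahedron (vertex-face graph of
the hemi-icosahedron): `v : Fin 6` is adjacent to `f ∈ faces` iff `v ∈ f`. -/
def piI : SimpleGraph V16 := SimpleGraph.fromRel piRel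

instance : DecidableRel piI.Adj := fun a b =>
  decidable_of_iff _ (SimpleGraph.fromRel_adj piRel a b).symm

/-- The relation of `Π_I` together with the three extra edges `{1,3}`, `{0,2}`, `{4,5}`. -/
def xiRel : V16 → V16 → Prop := fun a b =>
  match a, b with
  | Sum.inl v, Sum.inr f => v ∈ f.1
  | Sum.inl v, Sum.inl w => (v = 1 ∧ w = 3) ∨ (v = 0 ∧ w = 2) ∨ (v = 4 ∧ w = 5)
  | _, _ => False

instance : DecidableRel xiRel := fun a b =>
  match a, b with
  | Sum.inl v, Sum.inr f => inferInstanceAs (Decidable (v ∈ f.1))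
  | Sum.inl v, Sum.inl w =>
      inferInstanceAs (Decidable ((v = 1 ∧ w = 3) ∨ (v = 0 ∧ w = 2) ∨ (v = 4 ∧ w = 5)))
  | Sum.inr _, Sum.inl _ => Decidable.isFalse id
  | Sum.inr _, Sum.inr _ => Decidable.isFalse id

/-- `Ξ_I`: the graph `Π_I` with the three extra edges `{1,3}`, `{0,2}`, `{4,5}` added. -/
def xiI : SimpleGraph V16 := SimpleGraph.fromRel xiRel

instance : DecidableRel xiI.Adj := fun a b =>
  decidable_of_iff _ (SimpleGraph.fromRel_adj xiRel a b).symm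

/-- Adjacency between vertices of the `Fin 6` side. -/
def eRel (v w : Fin 6) : Bool :=
  match v.1, w.1 with
  | 1, 3 => true
  | 3, 1 => true
  | 0, 2 => true
  | 2, 0 => true
  | 4, 5 => true
  | 5, 4 => true
  | _, _ => false

theorem adj_ll (v w : Fin 6) : xiI.Adj (Sum.inl v) (Sum.inl w) ↔ eRel v w = true := by
  revert v w; decide

theorem adj_lr (v : Fin 6) (f) : xiI.Adj (Sum.inl v) (Sum.inr f) ↔ v ∈ f.1 := by
  simp [xiI, SimpleGraph.fromRel_adj, xiRel]

theorem adj_rl (v : Fin 6) (f) : xiI.Adj (Sum.inr f) (Sum.inl v) ↔ v ∈ f.1 := by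
  rw [SimpleGraph.adj_comm, adj_lr]

theorem adj_rr (f g) : ¬ xiI.Adj (Sum.inr f) (Sum.inr g) := by
  simp [xiI, SimpleGraph.fromRel_adj, xiRel]

theorem deg_l : ∀ v : Fin 6, xiI.degree (Sum.inl v) = 6 := by decide +kernel

theorem deg_r : ∀ f : {f : Finset (Fin 6) // f ∈ faces}, xiI.degree (Sum.inr f) = 3 := by
  decide +kernel

/-- Permutations preserving the matching and the faces. -/
def good (σ : Equiv.Perm (Fin 6)) : Prop :=
  (∀ v w, eRel (σ v) (σ w) = eRel v w) ∧ ∀ f ∈ faces, f.map σ.toEmbedding ∈ faces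

instance : DecidablePred good := fun σ => by unfold good; infer_instance

theorem card_good : Fintype.card {σ // good σ} = 12 := by decide +kernel

/-- The induced map on faces. -/
noncomputable def faceMap (σ : {σ // good σ}) : Equiv.Perm {f : Finset (Fin 6) // f ∈ faces} :=
  Equiv.ofBijective (fun f => ⟨f.1.map σ.1.toEmbedding, σ.2.2 f.1 f.2⟩) <| by
    rw [← Finite.injective_iff_bijective]
    intro f g h
    have h' := congrArg Subtype.val h
    exact Subtype.ext (Finset.map_injective _ h')

theorem faceMap_val (σ : {σ // good σ}) (f) :
    (faceMap σ f).1 = f.1.map σ.1.toEmbedding := rfl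

/-- The induced automorphism. -/
noncomputable def toAut (σ : {σ // good σ}) : xiI ≃g xiI where
  toEquiv := Equiv.sumCongr σ.1 (faceMap σ)
  map_rel_iff' := by
    rintro (v | f) (w | g)
    · simp [adj_ll, σ.2.1]
    · simp [adj_lr, faceMap_val]
    · simp [adj_rl, faceMap_val]
    · simp [adj_rr]

theorem toAut_bij : Function.Bijective toAut := by
  constructor
  · intro σ τ h
    apply Subtype.ext
    ext1 v
    have := congrArg (fun φ : xiI ≃g xiI => φ (Sum.inl v)) h
    exact Sum.inl_injective this
  · intro φ
    have hm : Set.MapsTo φ.toEquiv (Set.range Sum.inl) (Set.range Sum.inl) := by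
      rintro _ ⟨v, rfl⟩
      rcases h : φ.toEquiv (Sum.inl v) with w | f
      · exact ⟨w, rfl⟩
      · have h1 := φ.degree_eq (Sum.inl v)
        have h2 : φ (Sum.inl v) = Sum.inr f := h
        rw [h2, deg_r, deg_l] at h1
        omega
    obtain ⟨⟨σ, τ⟩, hst⟩ := Equiv.Perm.mem_sumCongrHom_range_of_perm_mapsTo_inl hm
    have hl : ∀ v, φ (Sum.inl v) = Sum.inl (σ v) := fun v =>
      (congrArg (fun e : Equiv.Perm V16 => e (Sum.inl v)) hst).symm
    have hr : ∀ f, φ (Sum.inr f) = Sum.inr (τ f) := fun f =>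
      (congrArg (fun e : Equiv.Perm V16 => e (Sum.inr f)) hst).symm
    have hf : ∀ f, (τ f).1 = f.1.map σ.toEmbedding := by
      intro f
      ext v
      obtain ⟨w, rfl⟩ := σ.surjective v
      have := φ.map_adj_iff (v := Sum.inl w) (w := Sum.inr f)
      rw [hl, hr, adj_lr, adj_lr] at this
      simpa using this
    have hg : good σ := by
      refine ⟨fun v w => ?_, fun f hf' => ?_⟩
      · have := φ.map_adj_iff (v := Sum.inl v) (w := Sum.inl w)
        rw [hl, hl, adj_ll, adj_ll] at this
        exact Bool.eq_iff_iff.2 this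
      · have := hf ⟨f, hf'⟩
        rw [← this]
        exact (τ ⟨f, hf'⟩).2
    refine ⟨⟨σ, hg⟩, ?_⟩
    apply RelIso.ext
    rintro (v | f)
    · exact (hl v).symm
    · rw [hr]
      exact congrArg Sum.inr (Subtype.ext (hf f).symm)

/-- The automorphism group of `Ξ_I` has exactly 12 elements. -/
theorem stmt_12 : Nat.card (xiI ≃g xiI) = 12 := by
  rw [← Nat.card_congr (Equiv.ofBijective _ toAut_bij), Nat.card_eq_fintype_card, card_good]
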